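/- arXiv:2409.18838 — 2 statements merged into one kernel-verified Lean document; each statement's English description precedes it below -/
import Mathlib

section
/- Let $d \ge 1$, let $V$ be a real vector space and let $B : V \times V \to \mathbb{R}$ be a symmetric bilinear form. Let $(b_0, b_1, \ldots, b_d)$ and $(f_0, f_1, \ldots, f_d)$ be families of vectors in $V$ with $B(b_\alpha, b_\beta) = \eta_{\alpha\beta}$ and $B(f_\alpha, f_\beta) = \eta_{\alpha\beta}$ for all $\alpha, \beta \in \{0, 1, \ldots, d\}$, and let $L$ be a real $(d+1) \times (d+1)$ matrix such that $f_\alpha = \sum_{\beta=0}^d L_{\alpha\beta} b_\beta$ for all $\alpha$. Then $\max_{\alpha, \beta} |L_{\alpha\beta}| \le |B(b_0, f_0)|$. -/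
/-!
The orthonormality of `b` and `f` gives `L η Lᵀ = η`. Since `η² = 1`, this says that `η Lᵀ η` is
a right inverse of `L`, hence also a left inverse, so `Lᵀ η L = η` as well. The diagonal entries of
these two identities are `∑ᵢ L α i ² - L α 0 ² = η α α` over the spatial `i`, and the same for
columns. Row `0` and column `0` give `L 0 i ² ≤ L 0 0 ² - 1` and `L i 0 ² ≤ L 0 0 ² - 1`, and row
`i` then gives `L i j ² ≤ 1 + L i 0 ² ≤ L 0 0 ²`. Finally `B (b 0) (f 0) = -L 0 0`.
-/

/-- The Minkowski metric matrix `η = diag(-1, 1, …, 1)` on `Fin (d+1)`. -/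
noncomputable def minkowskiEta (d : ℕ) : Matrix (Fin (d + 1)) (Fin (d + 1)) ℝ :=
  Matrix.diagonal (fun i => if i = 0 then (-1 : ℝ) else 1)

theorem minkowskiEta_mul_self (d : ℕ) : minkowskiEta d * minkowskiEta d = 1 := by
  rw [minkowskiEta, Matrix.diagonal_mul_diagonal, ← Matrix.diagonal_one]
  congr 1
  funext i
  split_ifs <;> norm_num

theorem transpose_mul_eta_mul {d : ℕ} {L : Matrix (Fin (d + 1)) (Fin (d + 1)) ℝ}
    (h : L * minkowskiEta d * L.transpose = minkowskiEta d) :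
    L.transpose * minkowskiEta d * L = minkowskiEta d := by
  have h1 : L * (minkowskiEta d * L.transpose * minkowskiEta d) = 1 := by
    rw [← Matrix.mul_assoc, ← Matrix.mul_assoc, h, minkowskiEta_mul_self]
  have h2 := mul_eq_one_comm.mp h1
  calc L.transpose * minkowskiEta d * L
      = (minkowskiEta d * minkowskiEta d) * (L.transpose * minkowskiEta d * L) := by
        rw [minkowskiEta_mul_self, Matrix.one_mul]
    _ = minkowskiEta d * (minkowskiEta d * L.transpose * minkowskiEta d * L) := by
        simp only [Matrix.mul_assoc]
    _ = minkowskiEta d := by rw [h2, Matrix.mul_one]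

/-- The diagonal entries of `M η Mᵀ = η`, with the time component split off. -/
theorem row_identity {d : ℕ} {M : Matrix (Fin (d + 1)) (Fin (d + 1)) ℝ}
    (h : M * minkowskiEta d * M.transpose = minkowskiEta d) (α : Fin (d + 1)) :
    -(M α 0) ^ 2 + ∑ j : Fin d, (M α j.succ) ^ 2 = if α = 0 then -1 else 1 := by
  have h1 := congrFun (congrFun h α) α
  rw [Matrix.mul_apply, Fin.sum_univ_succ] at h1
  simpa [minkowskiEta, Matrix.mul_diagonal, Fin.succ_ne_zero, ← pow_two] using h1

theorem row_entry_sq_le {d : ℕ} {M : Matrix (Fin (d + 1)) (Fin (d + 1)) ℝ}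
    (h : M * minkowskiEta d * M.transpose = minkowskiEta d) (α : Fin (d + 1)) (j : Fin d) :
    (M α j.succ) ^ 2 ≤ (M α 0) ^ 2 + if α = 0 then -1 else 1 := by
  have h1 := row_identity h α
  have h2 : (M α j.succ) ^ 2 ≤ ∑ j : Fin d, (M α j.succ) ^ 2 :=
    Finset.single_le_sum (f := fun j : Fin d => (M α j.succ) ^ 2)
      (fun i _ => sq_nonneg _) (Finset.mem_univ j)
  linarith

/-- Lemma 3.1: the Lorentz transformation relating two orthonormal bases of a
Lorentzian inner product is bounded entrywise by the inner product of the two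
timelike basis vectors. -/
theorem lorentz_transformation_entry_bound
    (d : ℕ) (hd : 1 ≤ d) (V : Type*) [AddCommGroup V] [Module ℝ V]
    (B : LinearMap.BilinForm ℝ V) (hBsymm : ∀ x y : V, B x y = B y x)
    (b f : Fin (d + 1) → V)
    (hb : ∀ α β, B (b α) (b β) = minkowskiEta d α β)
    (hf : ∀ α β, B (f α) (f β) = minkowskiEta d α β)
    (L : Matrix (Fin (d + 1)) (Fin (d + 1)) ℝ)
    (hL : ∀ α, f α = ∑ β, L α β • b β) :
    ∀ α β, |L α β| ≤ |B (b 0) (f 0)| := by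
  have hrow : L * minkowskiEta d * L.transpose = minkowskiEta d := by
    ext α β
    rw [← hf α β, hL α, hL β]
    simp [hb, Matrix.mul_apply, minkowskiEta, Matrix.diagonal_apply, mul_comm]
  have hcol : L.transpose * minkowskiEta d * L.transpose.transpose = minkowskiEta d := by
    rw [Matrix.transpose_transpose]
    exact transpose_mul_eta_mul hrow
  have h00 : B (b 0) (f 0) = -L 0 0 := by
    rw [hL 0]
    simp [hb, minkowskiEta, Matrix.diagonal_apply]
  intro α β
  rw [h00, abs_neg]
  apply sq_le_sq.mp
  refine Fin.cases ?_ (fun i => ?_) α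
  · refine Fin.cases le_rfl (fun j => ?_) β
    have h1 := row_entry_sq_le hrow 0 j
    rw [if_pos rfl] at h1
    linarith
  · have h1 := row_entry_sq_le hcol 0 i
    rw [if_pos rfl] at h1
    simp only [Matrix.transpose_apply] at h1
    refine Fin.cases (by linarith) (fun j => ?_) β
    have h2 := row_entry_sq_le hrow i.succ j
    rw [if_neg (Fin.succ_ne_zero i)] at h2
    linarith
end

section
/- Let $d \ge 1$ and let $L$ be a real $(d+1) \times (d+1)$ matrix satisfying $L \eta L^T = \eta$. Then $\max_{\alpha, \beta} |L_{\alpha\beta}| \le |L_{00}|$. -/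
/-- `η Lᵀ η` is a right inverse of `L`, hence also a left inverse. -/
theorem lorentz_transpose {d : ℕ} {L : Matrix (Fin (d + 1)) (Fin (d + 1)) ℝ}
    (hL : L * minkowskiEta d * L.transpose = minkowskiEta d) :
    L.transpose * minkowskiEta d * L.transpose.transpose = minkowskiEta d := by
  have h1 : L * (minkowskiEta d * L.transpose * minkowskiEta d) = 1 := by
    rw [← Matrix.mul_assoc, ← Matrix.mul_assoc, hL, minkowskiEta_mul_self]
  have h2 := mul_eq_one_comm.mp h1
  rw [Matrix.transpose_transpose]
  calc L.transpose * minkowskiEta d * L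
      = (minkowskiEta d * minkowskiEta d) * (L.transpose * minkowskiEta d * L) := by
        rw [minkowskiEta_mul_self, Matrix.one_mul]
    _ = minkowskiEta d * (minkowskiEta d * L.transpose * minkowskiEta d * L) := by
        simp only [Matrix.mul_assoc]
    _ = minkowskiEta d := by rw [h2, Matrix.mul_one]

/-- The diagonal entries of `L η Lᵀ = η`. -/
theorem lorentz_row {d : ℕ} {L : Matrix (Fin (d + 1)) (Fin (d + 1)) ℝ}
    (hL : L * minkowskiEta d * L.transpose = minkowskiEta d) (i : Fin (d + 1)) :
    ∑ j : Fin d, L i j.succ ^ 2 = L i 0 ^ 2 + if i = 0 then (-1 : ℝ) else 1 := by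
  have h := congrFun (congrFun hL i) i
  rw [Matrix.mul_apply, Fin.sum_univ_succ] at h
  simp only [minkowskiEta, Matrix.mul_diagonal, Matrix.transpose_apply, Matrix.diagonal_apply_eq,
    Fin.succ_ne_zero, if_true, if_false, mul_one] at h
  simp only [pow_two]
  linarith

theorem lorentz_entry_sq_le {d : ℕ} {L : Matrix (Fin (d + 1)) (Fin (d + 1)) ℝ}
    (hL : L * minkowskiEta d * L.transpose = minkowskiEta d) (i : Fin (d + 1)) (j : Fin d) :
    L i j.succ ^ 2 ≤ L i 0 ^ 2 + if i = 0 then (-1 : ℝ) else 1 := by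
  rw [← lorentz_row hL i]
  exact Finset.single_le_sum (f := fun j : Fin d => L i j.succ ^ 2)
    (fun _ _ => sq_nonneg _) (Finset.mem_univ j)

/-- Matrix form of Lemma 3.1: every entry of a Lorentz matrix is bounded in
absolute value by `|L₀₀|`. -/
theorem lorentz_matrix_entry_bound
    (d : ℕ) (hd : 1 ≤ d) (L : Matrix (Fin (d + 1)) (Fin (d + 1)) ℝ)
    (hL : L * minkowskiEta d * L.transpose = minkowskiEta d) :
    ∀ α β, |L α β| ≤ |L 0 0| := by
  have hcol (i : Fin d) : L i.succ 0 ^ 2 ≤ L 0 0 ^ 2 + -1 := by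
    simpa using lorentz_entry_sq_le (lorentz_transpose hL) 0 i
  intro α β
  rw [← sq_le_sq]
  refine Fin.cases ?_ (fun j => ?_) β
  · refine Fin.cases le_rfl (fun i => ?_) α
    linarith [hcol i]
  · have hrow := lorentz_entry_sq_le hL α j
    revert hrow
    refine Fin.cases (fun hrow => ?_) (fun i hrow => ?_) α
    · rw [if_pos rfl] at hrow
      linarith
    · rw [if_neg (Fin.succ_ne_zero i)] at hrow
      linarith [hcol i]
end
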